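/- Define U : ℝ → ℝ by U(x) = (100 − 50√2)x for x ≤ 1/(2√2) and U(x) = 100x(1−x) − 12.5 for x > 1/(2√2). Then U is differentiable at x₀ = 1/(2√2) with derivative U'(x₀) = 100 − 50√2; in particular U is continuous at x₀. -/

import Mathlib

/-- The left half of the exact one-bump obstacle solution,
`U(x) = (100 − 50√2)x` for `x ≤ 1/(2√2)` and `U(x) = 100x(1−x) − 12.5` for `x > 1/(2√2)`,
is differentiable at the contact point `x₀ = 1/(2√2)` with `U'(x₀) = 100 − 50√2`;
in particular it is continuous there. -/
theorem stmt_13 (U : ℝ → ℝ)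
    (hU : ∀ x, U x = if x ≤ 1 / (2 * Real.sqrt 2)
        then (100 - 50 * Real.sqrt 2) * x
        else 100 * x * (1 - x) - 12.5) :
    HasDerivAt U (100 - 50 * Real.sqrt 2) (1 / (2 * Real.sqrt 2)) ∧
      ContinuousAt U (1 / (2 * Real.sqrt 2)) := by
  have h_sq : Real.sqrt 2 * Real.sqrt 2 = 2 := Real.mul_self_sqrt (by norm_num)
  have h_contact : 1 / (2 * Real.sqrt 2) = Real.sqrt 2 / 4 := by
    rw [div_eq_div_iff (by positivity) (by norm_num)]
    linarith
  rw [h_contact] at hU ⊢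
  suffices h : HasDerivAt U (100 - 50 * Real.sqrt 2) (Real.sqrt 2 / 4) from
    ⟨h, h.continuousAt⟩
  have h_linear : HasDerivAt (fun x : ℝ => (100 - 50 * Real.sqrt 2) * x)
      (100 - 50 * Real.sqrt 2) (Real.sqrt 2 / 4) := by
    simpa using (hasDerivAt_id (Real.sqrt 2 / 4)).const_mul (100 - 50 * Real.sqrt 2)
  have h_parabola : HasDerivAt (fun x : ℝ => 100 * x * (1 - x) - 12.5)
      (100 - 50 * Real.sqrt 2) (Real.sqrt 2 / 4) := by
    have hid := hasDerivAt_id' (Real.sqrt 2 / 4)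
    exact (((hid.const_mul 100).mul (hid.const_sub 1)).sub_const 12.5).congr_deriv (by ring)
  have h_left : HasDerivWithinAt U (100 - 50 * Real.sqrt 2)
      (Set.Iic (Real.sqrt 2 / 4)) (Real.sqrt 2 / 4) :=
    h_linear.hasDerivWithinAt.congr_of_mem
      (fun x hx => by rw [hU, if_pos (Set.mem_Iic.mp hx)]) Set.self_mem_Iic
  have h_right : HasDerivWithinAt U (100 - 50 * Real.sqrt 2)
      (Set.Ici (Real.sqrt 2 / 4)) (Real.sqrt 2 / 4) := by
    refine h_parabola.hasDerivWithinAt.congr_of_mem (fun x hx => ?_) Set.self_mem_Ici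
    rcases (Set.mem_Ici.mp hx).eq_or_lt with rfl | hlt
    · rw [hU, if_pos le_rfl]
      linear_combination (-25 / 4) * h_sq
    · rw [hU, if_neg hlt.not_ge]
  simpa [Set.Iic_union_Ici] using h_left.union h_right
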